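/- arXiv:2110.05250 — 2 statements merged into one kernel-verified Lean document; each statement's English description precedes it below -/
import Mathlib

section
/- Let C be a closed, convex, bounded subset of a separable Banach space X with 0 ∈ C. If C is Haar positive (not Haar null), then every null sequence in X is C-fit, i.e., F_C(X) = c₀(X); in particular, C is compactivorous. -/
open Filter Topology Pointwise

/-- The symmetrisation of a sequence: `(x₀, x₁, …) ↦ (x₀, −x₀, x₁, −x₁, …)`. -/
def symSeq {X : Type*} [NormedAddCommGroup X] (x : ℕ → X) : ℕ → X :=
  fun n => if n % 2 = 0 then x (n / 2) else -(x (n / 2))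

/-- `x` is a `C`-fit sequence: `x` is a null sequence and there are `z` and `λ > 0`
with `z + Σ(x) ⊆ λ • C`. -/
def CFit {X : Type*} [NormedAddCommGroup X] [NormedSpace ℝ X] (C : Set X) (x : ℕ → X) : Prop :=
  Tendsto x atTop (𝓝 (0 : X)) ∧ ∃ (z : X) (l : ℝ), 0 < l ∧ ∀ n, z + symSeq x n ∈ l • C

/-- The `C`-fitting cost `φ_C(x) = inf {‖z‖ + λ : z + Σ(x) ⊆ λ • C, λ > 0}`. -/
noncomputable def phiC {X : Type*} [NormedAddCommGroup X] [NormedSpace ℝ X]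
    (C : Set X) (x : ℕ → X) : ℝ :=
  sInf {c : ℝ | ∃ (z : X) (l : ℝ), 0 < l ∧ (∀ n, z + symSeq x n ∈ l • C) ∧ c = ‖z‖ + l}

/-- `E` is compactivorous. -/
def Compactivorous {X : Type*} [NormedAddCommGroup X] [NormedSpace ℝ X] (E : Set X) : Prop :=
  ∀ K : Set X, IsCompact K → ∃ (z : X) (δ : ℝ), 0 < δ ∧ (fun k => z + δ • k) '' K ⊆ E

/-- `E` is Haar null: some Borel probability measure kills every translate of `E`. -/
def HaarNull {X : Type*} [NormedAddCommGroup X] [MeasurableSpace X] (E : Set X) : Prop :=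
  ∃ μ : MeasureTheory.Measure X, MeasureTheory.IsProbabilityMeasure μ ∧
    ∀ x : X, μ ((fun e => x + e) '' E) = 0

open MeasureTheory Set

/-- Resampling one coordinate independently preserves an infinite product measure. -/
theorem map_update_prod_infinitePi {ι : Type*} [DecidableEq ι] {E : ι → Type*}
    [∀ i, MeasurableSpace (E i)] (m : (i : ι) → Measure (E i)) [∀ i, IsProbabilityMeasure (m i)]
    (k : ι) :
    ((Measure.infinitePi m).prod (m k)).map (fun p => Function.update p.1 k p.2) =
      Measure.infinitePi m := by
  have hmeas : Measurable (fun p : (Π i, E i) × E k => Function.update p.1 k p.2) := by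
    fun_prop
  refine Measure.eq_infinitePi _ (fun s t ht => ?_)
  rw [Measure.map_apply hmeas (MeasurableSet.pi s.countable_toSet fun i _ => ht i)]
  have hpre : (fun p : (Π i, E i) × E k => Function.update p.1 k p.2) ⁻¹' Set.pi s t =
      (Set.pi (s.erase k) t) ×ˢ (if k ∈ s then t k else univ) := by
    ext p
    simp only [mem_preimage, Set.mem_pi, mem_prod, SetLike.mem_coe, Finset.mem_erase]
    constructor
    · intro h
      refine ⟨fun i hi => by simpa [hi.1] using h i hi.2, ?_⟩
      split_ifs with hk
      · simpa using h k hk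
      · trivial
    · rintro ⟨h₁, h₂⟩ i hi
      by_cases hik : i = k
      · subst hik
        simpa [hi] using h₂
      · simpa [hik] using h₁ i ⟨hik, hi⟩
  rw [hpre, Measure.prod_prod, Measure.infinitePi_pi _ (fun i _ => ht i)]
  split_ifs with hk
  · exact Finset.prod_erase_mul _ _ hk
  · rw [Finset.erase_eq_of_notMem hk, measure_univ, mul_one]

/-- A zero-one law: a measurable set in an infinite product, all of whose one-dimensional sections
have measure at most `c < 1`, is null. -/
theorem infinitePi_real_eq_zero_of_update_le {ι : Type*} [DecidableEq ι] [Infinite ι]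
    {E : ι → Type*}
    [∀ i, MeasurableSpace (E i)] (m : (i : ι) → Measure (E i)) [∀ i, IsProbabilityMeasure (m i)]
    {A : Set (Π i, E i)} (hA : MeasurableSet A) {c : ℝ} (hc : c < 1)
    (h : ∀ k ω, (m k).real {v | Function.update ω k v ∈ A} ≤ c) :
    (Measure.infinitePi m).real A = 0 := by
  set P := Measure.infinitePi m with hP
  have hc0 : 0 ≤ c := by
    obtain ⟨ω⟩ : Nonempty (Π i, E i) := P.nonempty_of_neZero
    exact measureReal_nonneg.trans (h (Classical.arbitrary ι) ω)
  have hcyl : ∀ B ∈ measurableCylinders E, P.real (A ∩ B) ≤ c * P.real B := by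
    intro B hB
    obtain ⟨s, S, hS, rfl⟩ := (mem_measurableCylinders B).1 hB
    obtain ⟨k, hk⟩ := Infinite.exists_notMem_finset s
    have hmeas : Measurable (fun p : (Π i, E i) × E k => Function.update p.1 k p.2) := by
      fun_prop
    have hBm : MeasurableSet (cylinder s S) := hS.cylinder
    have hinv : ∀ ω v, Function.update ω k v ∈ cylinder s S ↔ ω ∈ cylinder s S := by
      intro ω v
      simp only [mem_cylinder]
      have : s.restrict (Function.update ω k v) = s.restrict ω := by
        ext i
        have : (i : ι) ≠ k := fun hik => hk (hik ▸ i.2)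
        simp [Finset.restrict, this]
      rw [this]
    have hle : P (A ∩ cylinder s S) ≤ ENNReal.ofReal c * P (cylinder s S) := by
      conv_lhs => rw [hP, ← map_update_prod_infinitePi m k]
      rw [Measure.map_apply hmeas (hA.inter hBm),
        Measure.prod_apply (hmeas (hA.inter hBm)), ← hP]
      calc ∫⁻ ω, m k (Prod.mk ω ⁻¹' ((fun p : (Π i, E i) × E k =>
              Function.update p.1 k p.2) ⁻¹' (A ∩ cylinder s S))) ∂P
          ≤ ∫⁻ ω, (cylinder s S).indicator (fun _ => ENNReal.ofReal c) ω ∂P := by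
            refine lintegral_mono fun ω => ?_
            by_cases hω : ω ∈ cylinder s S
            · rw [indicator_of_mem hω]
              refine (measure_mono (t := {v | Function.update ω k v ∈ A}) fun v hv => hv.1).trans ?_
              rw [← ofReal_measureReal]
              exact ENNReal.ofReal_le_ofReal (h k ω)
            · rw [indicator_of_notMem hω]
              refine (measure_mono_null (t := ∅) (fun v hv => ?_) measure_empty).le
              exact hω ((hinv ω v).1 hv.2)
        _ = _ := lintegral_indicator_const hBm _
    have := ENNReal.toReal_mono (by finiteness) hle
    rwa [ENNReal.toReal_mul, ENNReal.toReal_ofReal hc0] at this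
  by_contra hne
  have ha : 0 < P.real A := lt_of_le_of_ne measureReal_nonneg (Ne.symm hne)
  have hdense : P.MeasureDense (measurableCylinders E) :=
    .of_generateFrom_isSetAlgebra_finite _ isSetAlgebra_measurableCylinders
      generateFrom_measurableCylinders.symm
  obtain ⟨B, hB, hAB⟩ := hdense.approx A hA (measure_ne_top _ _) (P.real A * (1 - c) / 2)
    (by have : 0 < 1 - c := by linarith
        positivity)
  have hAB' : P.real (symmDiff A B) < P.real A * (1 - c) / 2 :=
    ENNReal.toReal_lt_of_lt_ofReal hAB
  have h₁ : P.real A ≤ P.real (A ∩ B) + P.real (symmDiff A B) := by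
    refine (measureReal_mono ?_).trans (measureReal_union_le _ _)
    intro x hx
    by_cases hxB : x ∈ B
    · exact Or.inl ⟨hx, hxB⟩
    · exact Or.inr (Or.inl ⟨hx, hxB⟩)
  have h₂ : P.real B ≤ P.real A + P.real (symmDiff A B) := by
    refine (measureReal_mono ?_).trans (measureReal_union_le _ _)
    intro x hx
    by_cases hxA : x ∈ A
    · exact Or.inl hxA
    · exact Or.inr (Or.inr ⟨hx, hxA⟩)
  have h₃ := hcyl B hB
  have h₄ : P.real (A ∩ B) ≤ P.real B := measureReal_mono inter_subset_right
  have h₅ : 0 ≤ P.real (symmDiff A B) := measureReal_nonneg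
  nlinarith

/-- A closed set is Haar null if there are probability measures, supported arbitrarily close to
the origin, that give mass at most `c < 1` to all of its translates. -/
theorem haarNull_of_forall_exists_measure {X : Type*} [NormedAddCommGroup X]
    [CompleteSpace X] [TopologicalSpace.SeparableSpace X] [MeasurableSpace X] [BorelSpace X]
    {C : Set X} (hC : IsClosed C) {c : ℝ} (hc : c < 1)
    (h : ∀ ε : ℝ, 0 < ε → ∃ m : Measure X, IsProbabilityMeasure m ∧
      (∀ᵐ v ∂m, ‖v‖ ≤ ε) ∧ ∀ z, m.real {v | z + v ∈ C} ≤ c) : HaarNull C := by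
  have : SecondCountableTopology X := UniformSpace.secondCountable_of_separable X
  choose m hm hsupp hle using fun k : ℕ => h ((1 / 2) ^ k) (by positivity)
  let T : ℕ → X → X := fun k => (Metric.closedBall 0 ((1 / 2 : ℝ) ^ k)).indicator id
  have hTm : ∀ k, Measurable (T k) := fun k =>
    measurable_id.indicator Metric.isClosed_closedBall.measurableSet
  have hTle : ∀ k v, ‖T k v‖ ≤ (1 / 2 : ℝ) ^ k := by
    intro k v
    by_cases hv : v ∈ Metric.closedBall (0 : X) ((1 / 2 : ℝ) ^ k)
    · simp only [T, indicator_of_mem hv, id]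
      exact mem_closedBall_zero_iff.1 hv
    · simp only [T, indicator_of_notMem hv, norm_zero]
      positivity
  have hTae : ∀ k, ∀ᵐ v ∂m k, T k v = v := by
    intro k
    filter_upwards [hsupp k] with v hv
    exact indicator_of_mem (mem_closedBall_zero_iff.2 hv) _
  have hsum : ∀ ω : ℕ → X, Summable fun k => T k (ω k) := fun ω =>
    Summable.of_norm_bounded summable_geometric_two fun k => hTle k (ω k)
  let S : (ℕ → X) → X := fun ω => ∑' k, T k (ω k)
  have hS : Measurable S := by
    have hlim : Tendsto (fun (n : ℕ) (ω : ℕ → X) => ∑ k ∈ Finset.range n, T k (ω k)) atTop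
        (𝓝 S) := by
      rw [tendsto_pi_nhds]
      intro ω
      exact (hsum ω).hasSum.tendsto_sum_nat
    refine measurable_of_tendsto_metrizable (fun n => ?_) hlim
    exact Finset.measurable_fun_sum _ fun k _ => (hTm k).comp (measurable_pi_apply k)
  have hupd : ∀ ω k v, S (Function.update ω k v) = S (Function.update ω k 0) + T k v := by
    intro ω k v
    have hT0 : T k 0 = 0 := by simp [T]
    have : ∀ w, S (Function.update ω k w) =
        T k w + ∑' j, if j = k then 0 else T j (ω j) := by
      intro w
      rw [show S (Function.update ω k w) = _ from (hsum _).tsum_eq_add_tsum_ite k]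
      congr 1
      · simp
      · refine tsum_congr fun j => ?_
        split_ifs with hj
        · rfl
        · simp [hj]
    rw [this v, this 0, hT0]
    abel
  refine ⟨(Measure.infinitePi m).map S, Measure.isProbabilityMeasure_map hS.aemeasurable,
    fun x => ?_⟩
  have hcl : IsClosed ((fun e => x + e) '' C) := (Homeomorph.addLeft x).isClosed_image.2 hC
  rw [Measure.map_apply hS hcl.measurableSet]
  rw [← measureReal_eq_zero_iff]
  refine infinitePi_real_eq_zero_of_update_le m (hS hcl.measurableSet) hc fun k ω => ?_
  refine le_of_eq_of_le (measureReal_congr ?_) (hle k (S (Function.update ω k 0) - x))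
  filter_upwards [hTae k] with v hv
  refine propext (?_ : S (Function.update ω k v) ∈ (fun e => x + e) '' C ↔
    S (Function.update ω k 0) - x + v ∈ C)
  rw [hupd, hv]
  constructor
  · rintro ⟨e, he, hxe⟩
    have : S (Function.update ω k 0) - x + v = e := by
      rw [sub_add_eq_add_sub, ← hxe]; simp
    rwa [this]
  · intro he
    exact ⟨_, he, by simp only; abel⟩

/-- A closed convex set is stable under convergent convex combinations with weights `2⁻¹, 2⁻², …`. -/
theorem Convex.tsum_geometric_two_smul_mem {X : Type*} [NormedAddCommGroup X] [NormedSpace ℝ X]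
    {C : Set X} (hC : IsClosed C) (hconv : Convex ℝ C) (h0 : (0 : X) ∈ C) {u : ℕ → X}
    (hu : ∀ j, u j ∈ C) (hs : Summable fun j => (1 / 2 : ℝ) ^ (j + 1) • u j) :
    ∑' j, (1 / 2 : ℝ) ^ (j + 1) • u j ∈ C := by
  refine hC.mem_of_tendsto hs.hasSum.tendsto_sum_nat (Eventually.of_forall fun n => ?_)
  induction n generalizing u with
  | zero => simpa using h0
  | succ n ih =>
    rw [Finset.sum_range_succ']
    have hs' : Summable fun j => (1 / 2 : ℝ) ^ (j + 1) • u (j + 1) := by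
      have := ((summable_nat_add_iff 1).2 hs).const_smul (2 : ℝ)
      refine this.congr fun j => ?_
      rw [smul_smul]
      congr 1
      rw [pow_succ _ (j + 1)]
      ring
    have := hconv (ih (fun j => hu (j + 1)) hs') (hu 0) (by norm_num : (0 : ℝ) ≤ 1 / 2)
      (by norm_num : (0 : ℝ) ≤ 1 / 2) (by norm_num)
    convert this using 2
    · rw [Finset.smul_sum]
      refine Finset.sum_congr rfl fun j _ => ?_
      rw [smul_smul]
      congr 1
      rw [pow_succ _ (j + 1)]
      ring
    · norm_num

/-- If every probability measure supported in a ball gives mass more than `3 / 4` to some translate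
of the closed convex set `C`, then `C` contains a translate of a fixed multiple of each finite
subset of that ball. -/
theorem exists_finite_smul_add_mem {X : Type*} [NormedAddCommGroup X] [NormedSpace ℝ X]
    [MeasurableSpace X] [BorelSpace X] {C : Set X} (hC : IsClosed C) (hconv : Convex ℝ C)
    (h0 : (0 : X) ∈ C) {ε : ℝ} (hε : 0 ≤ ε)
    (h : ∀ m : Measure X, IsProbabilityMeasure m → (∀ᵐ v ∂m, ‖v‖ ≤ ε) →
      ∃ z, 3 / 4 < m.real {v | z + v ∈ C})
    {ι : Type*} [Fintype ι] (f : ι → X) (hf : ∀ i, ‖f i‖ ≤ ε) :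
    ∃ z ∈ C, ∀ i, z + (1 / 4 : ℝ) • f i ∈ C := by
  classical
  let T : Set (ι → ℝ) := {a | ∃ z ∈ C, ∀ i, z + a i • f i ∈ C}
  let U : Set (ι → ℝ) := Set.pi univ fun _ => Ioi (1 / 4)
  have hT : Convex ℝ T := by
    rintro a ⟨z, hz, hza⟩ b ⟨w, hw, hwb⟩ s t hs ht hst
    refine ⟨s • z + t • w, hconv hz hw hs ht hst, fun i => ?_⟩
    convert hconv (hza i) (hwb i) hs ht hst using 1
    simp only [Pi.add_apply, Pi.smul_apply, smul_eq_mul]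
    module
  have hUo : IsOpen U := isOpen_set_pi finite_univ fun _ _ => isOpen_Ioi
  have hUc : Convex ℝ U := convex_pi fun _ _ => convex_Ioi _
  by_cases hTU : Disjoint U T
  swap
  · obtain ⟨a, haU, z, hz, hza⟩ := Set.not_disjoint_iff.1 hTU
    refine ⟨z, hz, fun i => ?_⟩
    have hai : 1 / 4 < a i := haU i trivial
    have hpos : 0 < a i := by linarith
    convert hconv hz (hza i) (a := 1 - 1 / 4 / a i) (b := 1 / 4 / a i) ?_ (by positivity)
      (by ring) using 1
    · rw [smul_add, smul_smul, div_mul_cancel₀ _ hpos.ne']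
      module
    · rw [sub_nonneg, div_le_one hpos]
      exact hai.le
  exfalso
  obtain ⟨φ, c, hφU, hφT⟩ := geometric_hahn_banach_open hUc hUo hT hTU
  let w : ι → ℝ := fun i => -φ (Pi.single i 1)
  have hφ : ∀ a, φ a = -∑ i, a i * w i := by
    intro a
    conv_lhs => rw [pi_eq_sum_univ' a]
    simp only [map_sum, map_smul, smul_eq_mul, w, mul_neg, Finset.sum_neg_distrib, neg_neg]
  have hc : c ≤ 0 := by simpa using hφT 0 ⟨0, h0, fun i => by simpa using h0⟩
  have hw : ∀ i, 0 ≤ w i := by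
    intro i
    by_contra! hi
    have h1 : φ 1 < c := hφU 1 fun j _ => by norm_num
    have ht : 0 ≤ (φ 1 - c) / w i := div_nonneg_of_nonpos (by linarith) hi.le
    have h2 := hφU (1 + ((φ 1 - c) / w i) • Pi.single i 1) fun j _ => ?_
    · rw [map_add, map_smul, smul_eq_mul, show φ (Pi.single i 1) = -w i by simp [w], mul_neg,
        div_mul_cancel₀ _ hi.ne] at h2
      linarith
    · have hsingle : 0 ≤ (Pi.single i 1 : ι → ℝ) j := by
        by_cases hij : j = i
        · subst hij; simp
        · simp [hij]
      simp only [Pi.add_apply, Pi.one_apply, Pi.smul_apply, smul_eq_mul, mem_Ioi]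
      nlinarith [mul_nonneg ht hsingle]
  set W := ∑ i, w i with hWdef
  have hW : -c < W / 3 := by
    have := hφU (fun _ => 1 / 3) fun j _ => by norm_num
    rw [hφ, ← Finset.mul_sum] at this
    linarith
  have hW0 : 0 < W := by linarith
  let m : Measure X := ENNReal.ofReal (1 / 2) • Measure.dirac 0 +
    ∑ i, ENNReal.ofReal (w i / W / 2) • Measure.dirac (f i)
  have hm : ∀ A : Set X, MeasurableSet A → m A = ENNReal.ofReal
      (1 / 2 * A.indicator 1 0 + ∑ i, w i / W / 2 * A.indicator 1 (f i)) := by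
    intro A hA
    have hind : ∀ x, 0 ≤ A.indicator (1 : X → ℝ) x := fun x =>
      indicator_nonneg (fun _ _ => zero_le_one) x
    have hind' : ∀ (r : ℝ) (x : X), ENNReal.ofReal r * A.indicator 1 x =
        ENNReal.ofReal (r * A.indicator 1 x) := by
      intro r x
      by_cases hx : x ∈ A <;> simp [hx]
    have hwn : ∀ i, 0 ≤ w i / W / 2 * A.indicator (1 : X → ℝ) (f i) := fun i =>
      mul_nonneg (div_nonneg (div_nonneg (hw i) hW0.le) zero_le_two) (hind _)
    rw [ENNReal.ofReal_add (mul_nonneg (by norm_num) (hind _))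
      (Finset.sum_nonneg fun i _ => hwn i), ENNReal.ofReal_sum_of_nonneg fun i _ => hwn i]
    simp only [m, Measure.add_apply, Measure.smul_apply, Measure.finsetSum_apply,
      Measure.dirac_apply' _ hA, smul_eq_mul, hind']
  have hsumw : ∑ i, w i / W / 2 = 1 / 2 := by
    rw [← Finset.sum_div, ← Finset.sum_div, ← hWdef, div_self hW0.ne']
  have hmprob : IsProbabilityMeasure m := by
    constructor
    rw [hm _ MeasurableSet.univ]
    simp only [indicator_univ, Pi.one_apply, mul_one, hsumw]
    norm_num
  have hmsupp : ∀ᵐ v ∂m, ‖v‖ ≤ ε := by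
    have hball : MeasurableSet {v : X | ‖v‖ ≤ ε}ᶜ :=
      (isClosed_le continuous_norm continuous_const).measurableSet.compl
    rw [ae_iff, ← compl_ofPred, hm _ hball]
    simp [hε, hf]
  obtain ⟨z, hz⟩ := h m hmprob hmsupp
  have hAm : MeasurableSet {v | z + v ∈ C} :=
    (hC.preimage (continuous_const.add continuous_id)).measurableSet
  let b : ι → ℝ := fun i => {v | z + v ∈ C}.indicator 1 (f i)
  have hb : ∀ i, b i ≤ 1 := fun i => indicator_le_self' (fun _ _ => zero_le_one) _
  have hwb : ∑ i, w i / W / 2 * b i = (∑ i, b i * w i) / W / 2 := by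
    rw [Finset.sum_div, Finset.sum_div]
    exact Finset.sum_congr rfl fun i _ => by ring
  have hwb0 : 0 ≤ ∑ i, w i / W / 2 * b i := Finset.sum_nonneg fun i _ =>
    mul_nonneg (div_nonneg (div_nonneg (hw i) hW0.le) zero_le_two)
      (indicator_nonneg (fun _ _ => zero_le_one) _)
  have hind0 : 0 ≤ {v | z + v ∈ C}.indicator (1 : X → ℝ) 0 :=
    indicator_nonneg (fun _ _ => zero_le_one) _
  rw [measureReal_def, hm _ hAm] at hz
  change 3 / 4 < (ENNReal.ofReal (_ + ∑ i, w i / W / 2 * b i)).toReal at hz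
  rw [ENNReal.toReal_ofReal (add_nonneg (mul_nonneg (by norm_num) hind0) hwb0)] at hz
  by_cases hzC : z ∈ C
  · have hbT : b ∈ T := by
      refine ⟨z, hzC, fun i => ?_⟩
      by_cases hi : f i ∈ {v | z + v ∈ C}
      · simpa [b, indicator_of_mem hi] using hi
      · simpa [b, indicator_of_notMem hi] using hzC
    have := hφT b hbT
    rw [hφ] at this
    rw [indicator_of_mem (by simpa using hzC), hwb] at hz
    have h3 : (∑ i, b i * w i) / W < 1 / 3 := by
      rw [div_lt_iff₀ hW0]
      linarith
    simp only [Pi.one_apply] at hz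
    linarith
  · rw [indicator_of_notMem (by simpa using hzC)] at hz
    have : ∑ i, w i / W / 2 * b i ≤ ∑ i, w i / W / 2 := Finset.sum_le_sum fun i _ =>
      mul_le_of_le_one_right (div_nonneg (div_nonneg (hw i) hW0.le) zero_le_two) (hb i)
    linarith

/-- A closed, bounded, convex set containing a translate of every finite subset of some fixed ball
is compactivorous. -/
theorem compactivorous_of_finite_add_mem {X : Type*} [NormedAddCommGroup X] [NormedSpace ℝ X]
    [CompleteSpace X] {C : Set X} (hC : IsClosed C) (hconv : Convex ℝ C)
    (hbdd : Bornology.IsBounded C) (h0 : (0 : X) ∈ C) {ε : ℝ} (hε : 0 < ε)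
    (h : ∀ F : Set X, F.Finite → (∀ f ∈ F, ‖f‖ ≤ ε) → ∃ z ∈ C, ∀ f ∈ F, z + f ∈ C) :
    Compactivorous C := by
  have key : ∀ K : Set X, IsCompact K → (∀ k ∈ K, ‖k‖ ≤ ε / 2) →
      ∃ z : X, ∀ k ∈ K, z + (1 / 2 : ℝ) • k ∈ C := by
    intro K hK hKε
    have hnet : ∀ j : ℕ, ∃ G : Set X, G.Finite ∧ (j = 0 → G = {0}) ∧
        ∀ k ∈ K, ∃ g ∈ G, ‖k - g‖ ≤ ε / 2 * (1 / 2 : ℝ) ^ j := by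
      intro j
      rcases eq_or_ne j 0 with rfl | hj
      · exact ⟨{0}, finite_singleton 0, fun _ => rfl, fun k hk => ⟨0, rfl, by simpa using hKε k hk⟩⟩
      · obtain ⟨G, -, hG, hcov⟩ := hK.finite_cover_balls
          (show 0 < ε / 2 * (1 / 2 : ℝ) ^ j by positivity)
        refine ⟨G, hG, fun h => absurd h hj, fun k hk => ?_⟩
        obtain ⟨g, hg, hkg⟩ := mem_iUnion₂.1 (hcov hk)
        exact ⟨g, hg, (mem_ball_iff_norm.1 hkg).le⟩
    choose G hGfin hG0 hGnet using hnet
    let F : ℕ → Set X := fun j =>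
      ((fun p : X × X => (2 : ℝ) ^ j • (p.1 - p.2)) '' (G (j + 1) ×ˢ G j)) ∩ {f | ‖f‖ ≤ ε}
    choose z hzC hz using fun j => h (F j)
      ((((hGfin (j + 1)).prod (hGfin j)).image _).inter_of_left _) fun f hf => hf.2
    obtain ⟨M, hM⟩ := hbdd.exists_norm_le
    have hgeom : Summable fun j : ℕ => (1 / 2 : ℝ) ^ (j + 1) :=
      (summable_nat_add_iff 1).2 summable_geometric_two
    have hsummable : ∀ u : ℕ → X, (∀ j, u j ∈ C) →
        Summable fun j => (1 / 2 : ℝ) ^ (j + 1) • u j := by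
      intro u hu
      refine Summable.of_norm_bounded (hgeom.mul_right M) fun j => ?_
      rw [norm_smul, Real.norm_of_nonneg (by positivity)]
      exact mul_le_mul_of_nonneg_left (hM _ (hu j)) (by positivity)
    refine ⟨∑' j, (1 / 2 : ℝ) ^ (j + 1) • z j, fun k hk => ?_⟩
    choose g hgG hg using fun j => hGnet j k hk
    have hg0 : g 0 = 0 := by simpa [hG0 0 rfl] using hgG 0
    have hdF : ∀ j, (2 : ℝ) ^ j • (g (j + 1) - g j) ∈ F j := by
      intro j
      refine ⟨⟨(g (j + 1), g j), ⟨hgG _, hgG _⟩, rfl⟩, ?_⟩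
      have hd : ‖g (j + 1) - g j‖ ≤ ε * (1 / 2 : ℝ) ^ j := by
        calc ‖g (j + 1) - g j‖ = ‖(k - g j) - (k - g (j + 1))‖ := by congr 1; abel
          _ ≤ ‖k - g j‖ + ‖k - g (j + 1)‖ := norm_sub_le _ _
          _ ≤ ε / 2 * (1 / 2 : ℝ) ^ j + ε / 2 * (1 / 2 : ℝ) ^ (j + 1) := add_le_add (hg _) (hg _)
          _ ≤ ε * (1 / 2 : ℝ) ^ j := by
            rw [pow_succ]
            have : 0 ≤ ε * (1 / 2 : ℝ) ^ j := by positivity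
            linarith
      change ‖(2 : ℝ) ^ j • (g (j + 1) - g j)‖ ≤ ε
      rw [norm_smul, Real.norm_of_nonneg (by positivity)]
      calc (2 : ℝ) ^ j * ‖g (j + 1) - g j‖ ≤ 2 ^ j * (ε * (1 / 2 : ℝ) ^ j) := by gcongr
        _ = ε := by rw [mul_left_comm, ← mul_pow]; norm_num
    have hu : ∀ j, z j + (2 : ℝ) ^ j • (g (j + 1) - g j) ∈ C := fun j => hz j _ (hdF j)
    have hterm : ∀ j, (1 / 2 : ℝ) ^ (j + 1) • (z j + (2 : ℝ) ^ j • (g (j + 1) - g j)) =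
        (1 / 2 : ℝ) ^ (j + 1) • z j + (1 / 2 : ℝ) • (g (j + 1) - g j) := by
      intro j
      rw [smul_add, smul_smul, pow_succ, mul_right_comm, ← mul_pow]
      norm_num
    have hglim : Tendsto g atTop (𝓝 k) := by
      rw [tendsto_iff_norm_sub_tendsto_zero]
      refine squeeze_zero (fun _ => norm_nonneg _) (fun j => (norm_sub_rev _ _).trans_le (hg j)) ?_
      simpa using (tendsto_pow_atTop_nhds_zero_of_lt_one (r := (1 / 2 : ℝ)) (by norm_num)
        (by norm_num)).const_mul (ε / 2)
    have hsumz := hsummable z hzC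
    have hsumu := hsummable _ hu
    have hlim : Tendsto (fun n => ∑ j ∈ Finset.range n,
        (1 / 2 : ℝ) ^ (j + 1) • (z j + (2 : ℝ) ^ j • (g (j + 1) - g j))) atTop
        (𝓝 (∑' j, (1 / 2 : ℝ) ^ (j + 1) • z j + (1 / 2 : ℝ) • k)) := by
      simp only [hterm, Finset.sum_add_distrib, ← Finset.smul_sum, Finset.sum_range_sub, hg0,
        sub_zero]
      exact hsumz.hasSum.tendsto_sum_nat.add (hglim.const_smul _)
    rw [tendsto_nhds_unique hlim hsumu.hasSum.tendsto_sum_nat]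
    exact hconv.tsum_geometric_two_smul_mem hC h0 hu hsumu
  intro K hK
  obtain ⟨R, hR, hKR⟩ := hK.isBounded.exists_pos_norm_le
  set t : ℝ := ε / 2 / R
  have ht : 0 < t := by positivity
  obtain ⟨z, hz⟩ := key ((fun k => t • k) '' K) (hK.image (continuous_const_smul t)) (by
    rintro _ ⟨k, hk, rfl⟩
    rw [norm_smul, Real.norm_of_nonneg ht.le]
    calc t * ‖k‖ ≤ t * R := by gcongr; exact hKR k hk
      _ = ε / 2 := div_mul_cancel₀ _ hR.ne')
  refine ⟨z, 1 / 2 * t, by positivity, ?_⟩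
  rintro _ ⟨k, hk, rfl⟩
  simpa only [smul_smul] using hz _ (mem_image_of_mem _ hk)

theorem tendsto_symSeq {X : Type*} [NormedAddCommGroup X] {x : ℕ → X}
    (hx : Tendsto x atTop (𝓝 0)) : Tendsto (symSeq x) atTop (𝓝 0) := by
  have h := hx.norm.comp (Nat.tendsto_div_const_atTop (two_ne_zero))
  rw [norm_zero] at h
  refine tendsto_zero_iff_norm_tendsto_zero.2 (h.congr fun n => ?_)
  simp only [symSeq, Function.comp_apply]
  split_ifs <;> simp

theorem Compactivorous.cFit {X : Type*} [NormedAddCommGroup X] [NormedSpace ℝ X] {C : Set X}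
    (hC : Compactivorous C) {x : ℕ → X} (hx : Tendsto x atTop (𝓝 0)) : CFit C x := by
  obtain ⟨z, δ, hδ, hsub⟩ := hC _ (tendsto_symSeq hx).isCompact_insert_range
  refine ⟨hx, δ⁻¹ • z, δ⁻¹, inv_pos.2 hδ, fun n => ?_⟩
  refine ⟨z + δ • symSeq x n, hsub ⟨_, mem_insert_of_mem _ (mem_range_self n), rfl⟩, ?_⟩
  simp only [smul_add, inv_smul_smul₀ hδ.ne']

/-- a Haar positive closed convex bounded set `C ∋ 0` in a separable Banach
space satisfies `F_C(X) = c₀(X)` (every null sequence is `C`-fit); in particular `C` is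
compactivorous. -/
theorem statement11 {X : Type*} [NormedAddCommGroup X] [NormedSpace ℝ X] [CompleteSpace X]
    [TopologicalSpace.SeparableSpace X] [MeasurableSpace X] [BorelSpace X]
    (C : Set X) (hC : IsClosed C) (hconv : Convex ℝ C) (hbdd : Bornology.IsBounded C)
    (h0 : (0 : X) ∈ C) (hpos : ¬ HaarNull C) :
    (∀ x : ℕ → X, Tendsto x atTop (𝓝 (0 : X)) → CFit C x) ∧ Compactivorous C := by
  suffices hcomp : Compactivorous C from ⟨fun x hx => hcomp.cFit hx, hcomp⟩
  obtain ⟨ε, hε, hm⟩ : ∃ ε : ℝ, 0 < ε ∧ ∀ m : Measure X, IsProbabilityMeasure m →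
      (∀ᵐ v ∂m, ‖v‖ ≤ ε) → ∃ z, 3 / 4 < m.real {v | z + v ∈ C} := by
    by_contra! hcon
    exact hpos (haarNull_of_forall_exists_measure hC (by norm_num) hcon)
  refine compactivorous_of_finite_add_mem hC hconv hbdd h0 (ε := ε / 4) (by positivity)
    fun F hF hFε => ?_
  have := hF.fintype
  obtain ⟨z, hz, hzF⟩ := exists_finite_smul_add_mem hC hconv h0 hε.le hm
    (fun f : F => (4 : ℝ) • (f : X)) fun f => by
      rw [norm_smul, Real.norm_of_nonneg (by norm_num)]
      linarith [hFε f f.2]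
  refine ⟨z, hz, fun f hf => ?_⟩
  simpa [smul_smul] using hzF ⟨f, hf⟩
end

section
/- Every Haar positive closed, convex set in a separable reflexive Banach space has nonempty interior. -/
open MeasureTheory Set Filter Topology

/-- In a reflexive space, a closed convex set `C` such that every finite subset of the ball of
radius `c` has a uniformly bounded translate within `c / 2` of `C` has nonempty interior. -/
theorem interior_nonempty_of_finite_translates {X : Type*} [NormedAddCommGroup X] [NormedSpace ℝ X]
    (hrefl : Function.Surjective (NormedSpace.inclusionInDoubleDual ℝ X))
    {C : Set X} (hC : IsClosed C) (hconv : Convex ℝ C) {R c : ℝ} (hc : 0 < c)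
    (H : ∀ F : Finset X, (∀ f ∈ F, ‖f‖ ≤ c) →
      ∃ x, ‖x‖ ≤ R ∧ ∀ f ∈ F, ∃ y ∈ C, ‖x + f - y‖ ≤ c / 2) :
    (interior C).Nonempty := by
  classical
  let I := {q : StrongDual ℝ X × ℝ × X // (∀ y ∈ C, q.1 y ≤ q.2.1) ∧ ‖q.2.2‖ ≤ c}
  let K : Set (WeakDual ℝ (StrongDual ℝ X)) :=
    WeakDual.toStrongDual ⁻¹' Metric.closedBall (0 : StrongDual ℝ (StrongDual ℝ X)) R
  have hK : IsCompact K := WeakDual.isCompact_closedBall _ _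
  let T : I → Set (WeakDual ℝ (StrongDual ℝ X)) := fun q =>
    {g | g q.1.1 + q.1.1 q.1.2.2 ≤ q.1.2.1 + c / 2 * ‖q.1.1‖}
  have hT : ∀ q, IsClosed (T q) := fun q =>
    isClosed_le ((WeakDual.eval_continuous q.1.1).add continuous_const) continuous_const
  obtain ⟨g, hgK, hgT⟩ : (K ∩ ⋂ q, T q).Nonempty := by
    refine hK.inter_iInter_nonempty T hT fun s => ?_
    obtain ⟨x, hx, hxs⟩ := H (s.image fun q => q.1.2.2) (by
      intro f hf
      obtain ⟨q, -, rfl⟩ := Finset.mem_image.1 hf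
      exact q.2.2)
    refine ⟨StrongDual.toWeakDual (NormedSpace.inclusionInDoubleDual ℝ X x), ?_, ?_⟩
    · change NormedSpace.inclusionInDoubleDual ℝ X x ∈ Metric.closedBall _ R
      exact (mem_closedBall_zero_iff (E := StrongDual ℝ (StrongDual ℝ X))).2
        ((NormedSpace.double_dual_bound ℝ X x).trans hx)
    · refine mem_iInter₂.2 fun q hq => ?_
      obtain ⟨y, hy, hxy⟩ := hxs _ (Finset.mem_image_of_mem _ hq)
      change q.1.1 x + q.1.1 q.1.2.2 ≤ q.1.2.1 + c / 2 * ‖q.1.1‖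
      have h1 := q.2.1 y hy
      have h2 := (le_abs_self _).trans (q.1.1.le_opNorm (x + q.1.2.2 - y))
      rw [map_sub, map_add] at h2
      have h3 := mul_le_mul_of_nonneg_left hxy (norm_nonneg q.1.1)
      linarith
  obtain ⟨x, hx⟩ := hrefl (WeakDual.toStrongDual g)
  have key : ∀ (φ : StrongDual ℝ X) (s : ℝ), (∀ y ∈ C, φ y ≤ s) →
      φ x + c / 2 * ‖φ‖ ≤ s := by
    intro φ s hs
    have h1 : ∀ u : X, ‖u‖ ≤ c → φ x + φ u ≤ s + c / 2 * ‖φ‖ := by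
      intro u hu
      have h := mem_iInter.1 hgT ⟨(φ, s, u), hs, hu⟩
      change g φ + φ u ≤ s + c / 2 * ‖φ‖ at h
      have h' : φ x = g φ := DFunLike.congr_fun hx φ
      rwa [h']
    have hM : 0 ≤ s + c / 2 * ‖φ‖ - φ x := by
      have := h1 0 (by simpa using hc.le)
      rw [map_zero] at this
      linarith
    have h2 : ‖φ‖ ≤ (s + c / 2 * ‖φ‖ - φ x) / c := by
      refine φ.opNorm_le_bound (by positivity) fun v => ?_
      rcases eq_or_ne v 0 with rfl | hv
      · simp
      have hv' : 0 < ‖v‖ := norm_pos_iff.2 hv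
      have hsc : ‖(c / ‖v‖) • v‖ ≤ c := by
        rw [norm_smul, Real.norm_of_nonneg (by positivity), div_mul_cancel₀ _ hv'.ne']
      have a1 := h1 _ hsc
      have a2 := h1 (-((c / ‖v‖) • v)) (by rwa [norm_neg])
      rw [map_neg, map_smul, smul_eq_mul] at a2
      rw [map_smul, smul_eq_mul] at a1
      have a3 : c / ‖v‖ * |φ v| ≤ s + c / 2 * ‖φ‖ - φ x := by
        rcases abs_cases (φ v) with h | h <;> rw [h.1] <;> linarith
      rw [Real.norm_eq_abs, div_mul_eq_mul_div, le_div_iff₀ hc]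
      rw [div_mul_eq_mul_div, div_le_iff₀ hv'] at a3
      linarith
    rw [le_div_iff₀ hc] at h2
    linarith
  refine ⟨x, mem_interior.2 ⟨Metric.ball x (c / 2), fun y hy => ?_, Metric.isOpen_ball,
    Metric.mem_ball_self (by positivity)⟩⟩
  by_contra hyC
  obtain ⟨φ, s, hs, hsy⟩ := geometric_hahn_banach_closed_point hconv hC hyC
  have h1 := key φ s fun a ha => (hs a ha).le
  have h2 := (le_abs_self _).trans (φ.le_opNorm (y - x))
  rw [map_sub] at h2
  rw [mem_ball_iff_norm] at hy
  have h3 := mul_le_mul_of_nonneg_left hy.le (norm_nonneg φ)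
  linarith

/-- If no bounded translate of the finite set `F` lies within `c / 2` of the convex set `C`, then
some probability weights on `F` give mass at most `3 / 4` to every bounded translate of `C`. -/
theorem exists_weights_of_no_translate {X : Type*} [NormedAddCommGroup X] [NormedSpace ℝ X]
    {C : Set X} (hconv : Convex ℝ C) {R c : ℝ} (hR : 0 ≤ R) (F : Finset X)
    (hF : ∀ f ∈ F, ‖f‖ ≤ c)
    (H : ¬ ∃ x, ‖x‖ ≤ R ∧ ∀ f ∈ F, ∃ y ∈ C, ‖x + f - y‖ ≤ c / 2) :
    ∃ p : F → ℝ, (∀ f, 0 ≤ p f) ∧ ∑ f, p f = 1 ∧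
      ∀ z : X, ‖z‖ ≤ R → ∑ f, p f * indicator {f : F | (f : X) - z ∈ C} 1 f ≤ 3 / 4 := by
  classical
  have hne : F.Nonempty := by
    rw [Finset.nonempty_iff_ne_empty]
    rintro rfl
    exact H ⟨0, by simpa using hR, by simp⟩
  let v : X → F → ℝ := fun z => indicator {f : F | (f : X) - z ∈ C} 1
  let V : Set (F → ℝ) := v '' {z | ‖z‖ ≤ R ∧ ∃ f : F, (f : X) - z ∈ C}
  have hVfin : V.Finite := by
    refine (Set.Finite.pi' (t := fun _ : F => ({0, 1} : Set ℝ)) fun _ => by simp).subset ?_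
    rintro _ ⟨z, -, rfl⟩ f
    by_cases h : (f : X) - z ∈ C <;> simp [v, h]
  rcases V.eq_empty_or_nonempty with hV | hV
  · obtain ⟨f₀, hf₀⟩ := hne
    refine ⟨Pi.single ⟨f₀, hf₀⟩ 1, fun f => ?_, by simp, fun z hz => ?_⟩
    · by_cases h : f = ⟨f₀, hf₀⟩
      · subst h; simp
      · simp [h]
    · rw [Finset.sum_eq_zero]
      · norm_num
      · intro f _
        have : (f : X) - z ∉ C := fun h =>
          (hV ▸ (⟨z, ⟨hz, f, h⟩, rfl⟩ : v z ∈ V) : v z ∈ (∅ : Set (F → ℝ)))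
        simp [this]
  let Q : Set (F → ℝ) := {w | ∀ f, 3 / 4 ≤ w f}
  have hQconv : Convex ℝ Q := by
    intro a ha b hb s t hs ht hst f
    have h1 := mul_le_mul_of_nonneg_left (ha f) hs
    have h2 := mul_le_mul_of_nonneg_left (hb f) ht
    have : s * (3 / 4) + t * (3 / 4) = (3 / 4 : ℝ) := by rw [← add_mul, hst, one_mul]
    simp only [Pi.add_apply, Pi.smul_apply, smul_eq_mul]
    linarith
  have hQclosed : IsClosed Q := by
    have : Q = ⋂ f, {w : F → ℝ | 3 / 4 ≤ w f} := by ext; simp [Q]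
    rw [this]
    exact isClosed_iInter fun f => isClosed_le continuous_const (continuous_apply f)
  have hdisj : Disjoint (convexHull ℝ V) Q := by
    rw [Set.disjoint_left]
    intro w hw hwQ
    obtain ⟨ι, _, l, q, hl0, hl1, hq, rfl⟩ := mem_convexHull_iff_exists_fintype.1 hw
    choose z hz hzq using hq
    choose f₀ hf₀ using fun i => (hz i).2
    refine H ⟨-∑ i, l i • z i, ?_, fun f hf => ?_⟩
    · rw [norm_neg]
      calc ‖∑ i, l i • z i‖ ≤ ∑ i, l i * R := by
            refine norm_sum_le_of_le _ fun i _ => ?_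
            rw [norm_smul, Real.norm_of_nonneg (hl0 i)]
            exact mul_le_mul_of_nonneg_left (hz i).1 (hl0 i)
        _ = R := by rw [← Finset.sum_mul, hl1, one_mul]
    · let e : ι → X := fun i => if f - z i ∈ C then f else (f₀ i : X)
      refine ⟨∑ i, l i • (e i - z i), ?_, ?_⟩
      · refine hconv.sum_mem (fun i _ => hl0 i) hl1 fun i _ => ?_
        by_cases h : f - z i ∈ C
        · simp [e, h]
        · simpa [e, h] using hf₀ i
      · have h1 : -∑ i, l i • z i + f - ∑ i, l i • (e i - z i) = ∑ i, l i • (f - e i) := by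
          simp only [smul_sub, Finset.sum_sub_distrib, ← Finset.sum_smul, hl1, one_smul]
          abel
        rw [h1]
        have h2 : (3 / 4 : ℝ) ≤ ∑ i, l i * v (z i) ⟨f, hf⟩ := by
          have := hwQ ⟨f, hf⟩
          simpa [← hzq] using this
        have hc : 0 ≤ c := (norm_nonneg _).trans (hF f hf)
        calc ‖∑ i, l i • (f - e i)‖
            ≤ ∑ i, (l i - l i * v (z i) ⟨f, hf⟩) * (2 * c) := by
              refine norm_sum_le_of_le _ fun i _ => ?_
              rw [norm_smul, Real.norm_of_nonneg (hl0 i)]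
              by_cases h : f - z i ∈ C
              · simp [e, v, h]
              · have h3 : ‖f - (f₀ i : X)‖ ≤ 2 * c := by
                  have := norm_sub_le f (f₀ i : X)
                  linarith [hF f hf, hF _ (f₀ i).2]
                simpa [e, v, h] using mul_le_mul_of_nonneg_left h3 (hl0 i)
          _ = (1 - ∑ i, l i * v (z i) ⟨f, hf⟩) * (2 * c) := by
              rw [← Finset.sum_mul, Finset.sum_sub_distrib, hl1]
          _ ≤ (1 / 4) * (2 * c) := by gcongr; linarith
          _ = c / 2 := by ring
  obtain ⟨φ, a, b, ha, hab, hb⟩ := geometric_hahn_banach_compact_closed (convex_convexHull ℝ V)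
    (hVfin.isCompact_convexHull ℝ) hQconv hQclosed hdisj
  let p : F → ℝ := fun f => φ (Pi.single f 1)
  have hφ : ∀ w : F → ℝ, φ w = ∑ f, p f * w f := by
    intro w
    conv_lhs => rw [pi_eq_sum_univ' w]
    rw [map_sum]
    refine Finset.sum_congr rfl fun f _ => ?_
    rw [map_smul, smul_eq_mul, mul_comm]
  have hp : ∀ f, 0 ≤ p f := by
    intro f
    by_contra! hpf
    let t : ℝ := max 0 ((b - φ (fun _ => 3 / 4)) / p f)
    have hmem : (fun _ => 3 / 4 : F → ℝ) + t • Pi.single f 1 ∈ Q := by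
      intro g
      have : 0 ≤ t * (Pi.single f 1 : F → ℝ) g := by
        refine mul_nonneg (le_max_left _ _) ?_
        by_cases h : g = f
        · subst h; simp
        · simp [h]
      simpa using this
    have h1 := hb _ hmem
    rw [map_add, map_smul, smul_eq_mul] at h1
    have h2 : (b - φ (fun _ => 3 / 4)) / p f ≤ t := le_max_right _ _
    rw [div_le_iff_of_neg hpf] at h2
    change b < _ + t * p f at h1
    linarith
  have hlt : b < 3 / 4 * ∑ f, p f := by
    have := hb (fun _ => 3 / 4) fun _ => le_rfl
    rwa [hφ, ← Finset.sum_mul, mul_comm] at this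
  have hv : ∀ z, 0 ≤ ∑ f, p f * v z f := fun z =>
    Finset.sum_nonneg fun f _ => mul_nonneg (hp f) (indicator_nonneg (by simp) f)
  have hpos : 0 < ∑ f, p f := by
    obtain ⟨_, z, hz, rfl⟩ := hV
    have h1 := ha _ (subset_convexHull ℝ V ⟨z, hz, rfl⟩)
    rw [hφ] at h1
    linarith [hv z]
  refine ⟨fun f => p f / ∑ f, p f, fun f => div_nonneg (hp f) hpos.le, ?_, fun z hz => ?_⟩
  · rw [← Finset.sum_div, div_self hpos.ne']
  · have h0 : ∑ f, p f * v z f ≤ 3 / 4 * ∑ f, p f := by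
      by_cases h : ∃ f : F, (f : X) - z ∈ C
      · have h1 := ha _ (subset_convexHull ℝ V ⟨z, ⟨hz, h⟩, rfl⟩)
        rw [hφ] at h1
        linarith
      · push Not at h
        rw [Finset.sum_eq_zero]
        · positivity
        · intro f _
          simp [v, h f]
    simp only [div_mul_eq_mul_div]
    rw [← Finset.sum_div, div_le_iff₀ hpos]
    exact h0

/-- Replacing one coordinate of a family is jointly measurable. -/
theorem measurable_update_prod {ι B : Type*} [DecidableEq ι] [MeasurableSpace B] (n : ι) :
    Measurable fun q : (ι → B) × B => Function.update q.1 n q.2 := by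
  refine measurable_pi_iff.2 fun i => ?_
  by_cases h : i = n
  · subst h
    simpa using measurable_snd
  · simp only [Function.update_of_ne h]
    fun_prop

/-- Resampling one coordinate preserves an infinite product of probability measures. -/
theorem map_update_infinitePi {ι B : Type*} [DecidableEq ι] [MeasurableSpace B]
    (ν : ι → Measure B) [∀ n, IsProbabilityMeasure (ν n)] (n : ι) :
    ((Measure.infinitePi ν).prod (ν n)).map (fun q => Function.update q.1 n q.2) =
      Measure.infinitePi ν := by
  classical
  refine Measure.eq_infinitePi _ fun s t ht => ?_
  have hmeas := measurable_update_prod (B := B) n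
  rw [Measure.map_apply hmeas (.pi s.countable_toSet fun i _ => ht i)]
  have : (fun q : (ι → B) × B => Function.update q.1 n q.2) ⁻¹' Set.pi s t =
      (Set.pi (s.erase n : Finset ι) t) ×ˢ (if n ∈ s then t n else univ) := by
    ext q
    simp only [mem_preimage, Set.mem_pi, Finset.mem_coe, Set.mem_prod, Finset.mem_erase]
    constructor
    · refine fun h => ⟨fun i hi => by simpa [hi.1] using h i hi.2, ?_⟩
      split_ifs with hn
      · simpa using h n hn
      · trivial
    · rintro ⟨h1, h2⟩ i hi
      by_cases hin : i = n
      · subst hin; simpa [hi] using h2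
      · simpa [hin] using h1 i ⟨hin, hi⟩
  rw [this, Measure.prod_prod, Measure.infinitePi_pi _ fun i _ => ht i]
  split_ifs with hn
  · rw [mul_comm, Finset.mul_prod_erase s (fun i => ν i (t i)) hn]
  · rw [measure_univ, mul_one, Finset.erase_eq_of_notMem hn]

/-- A decreasing intersection of sets `A n` not depending on coordinate `n` is null if its
sections along the coordinate `n` eventually have mass at most `3 / 4`. -/
theorem infinitePi_eq_zero_of_sections {B : Type*} [MeasurableSpace B]
    (ν : ℕ → Measure B) [∀ n, IsProbabilityMeasure (ν n)] (A : ℕ → Set (ℕ → B))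
    (hA : ∀ n, MeasurableSet (A n)) (hanti : Antitone A)
    (hupd : ∀ n ω b, Function.update ω n b ∈ A n → ω ∈ A n)
    (hsec : ∀ᶠ n in atTop, ∀ ω, ν n {b | Function.update ω n b ∈ ⋂ k, A k} ≤ 3 / 4) :
    Measure.infinitePi ν (⋂ k, A k) = 0 := by
  set P := Measure.infinitePi ν
  have hAm : MeasurableSet (⋂ k, A k) := .iInter hA
  have h1 : ∀ᶠ n in atTop, P (⋂ k, A k) ≤ 3 / 4 * P (A n) := by
    filter_upwards [hsec] with n hn
    have hmeas := measurable_update_prod (B := B) n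
    have hP : P = (P.prod (ν n)).map fun q => Function.update q.1 n q.2 :=
      (map_update_infinitePi ν n).symm
    conv_lhs => rw [hP, Measure.map_apply hmeas hAm, Measure.prod_apply (hmeas hAm)]
    rw [← lintegral_indicator_const (hA n)]
    refine lintegral_mono fun ω => ?_
    by_cases hω : ω ∈ A n
    · rw [indicator_of_mem hω]
      exact hn ω
    · rw [indicator_of_notMem hω, nonpos_iff_eq_zero]
      convert measure_empty (μ := ν n)
      refine eq_empty_of_forall_notMem fun b hb => hω (hupd n ω b (mem_iInter.1 hb n))
  have h2 : Tendsto (fun n => 3 / 4 * P (A n)) atTop (𝓝 (3 / 4 * P (⋂ k, A k))) :=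
    ENNReal.Tendsto.const_mul (tendsto_measure_iInter_atTop
      (fun n => (hA n).nullMeasurableSet) hanti ⟨0, measure_ne_top _ _⟩)
      (.inr (ENNReal.div_ne_top (by simp) (by simp)))
  have h3 := ge_of_tendsto h2 h1
  have hfin : P (⋂ k, A k) ≠ ⊤ := measure_ne_top _ _
  lift P (⋂ k, A k) to NNReal using hfin with r
  have h4 := ENNReal.toReal_mono (ENNReal.mul_ne_top (ENNReal.div_ne_top (by simp) (by simp))
    ENNReal.coe_ne_top) h3
  simp only [ENNReal.coe_toReal, ENNReal.toReal_mul, ENNReal.toReal_div,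
    ENNReal.toReal_ofNat] at h4
  have h5 : (r : ℝ) = 0 := by linarith [r.2, (NNReal.coe_nonneg r)]
  simpa using h5

/-- If probability measures `ν n` on the unit ball are such that the law of `2⁻ⁿ b` gives mass at
most `3 / 4` to the translates of `C` by vectors of norm at most `n + 2`, then `C` is Haar null. -/
theorem haarNull_of_measures {X : Type*} [NormedAddCommGroup X] [NormedSpace ℝ X] [CompleteSpace X]
    [TopologicalSpace.SeparableSpace X] [MeasurableSpace X] [BorelSpace X]
    {C : Set X} (hC : IsClosed C) (hCne : C.Nonempty)
    (ν : ℕ → Measure (Metric.closedBall (0 : X) 1)) [∀ n, IsProbabilityMeasure (ν n)]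
    (hν : ∀ (n : ℕ) (z : X), ‖z‖ ≤ n + 2 →
      ν n {b | ((1 / 2 : ℝ) ^ n) • (b : X) - z ∈ C} ≤ 3 / 4) :
    HaarNull C := by
  have : SecondCountableTopology X := UniformSpace.secondCountable_of_separable X
  let Ω := ℕ → Metric.closedBall (0 : X) 1
  let Y : ℕ → Ω → X := fun n ω => ((1 / 2 : ℝ) ^ n) • (ω n : X)
  let S : Ω → X := fun ω => ∑' n, Y n ω
  have hYc : ∀ n, Continuous (Y n) := fun n => by fun_prop
  have hYn : ∀ n ω, ‖Y n ω‖ ≤ (1 / 2 : ℝ) ^ n := fun n ω => by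
    have h := mem_closedBall_zero_iff.1 (ω n).2
    rw [norm_smul, Real.norm_of_nonneg (by positivity)]
    exact mul_le_of_le_one_right (by positivity) h
  have hsum : ∀ ω, Summable fun n => Y n ω := fun ω =>
    .of_norm_bounded summable_geometric_two (hYn · ω)
  have hS : Measurable S := (continuous_tsum hYc summable_geometric_two hYn).measurable
  refine ⟨(Measure.infinitePi ν).map S, Measure.isProbabilityMeasure_map hS.aemeasurable,
    fun z => ?_⟩
  have hzC : (fun e => z + e) '' C = {y | y - z ∈ C} := by
    ext y
    constructor
    · rintro ⟨e, he, rfl⟩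
      simpa using he
    · exact fun h => ⟨y - z, h, by simp⟩
  have hclosed : IsClosed {y | y - z ∈ C} := hC.preimage (continuous_id.sub continuous_const)
  rw [hzC, Measure.map_apply hS hclosed.measurableSet]
  let A : ℕ → Set Ω := fun n =>
    {ω | Metric.infDist (∑ i ∈ Finset.range n, Y i ω - z) C ≤ 2 * (1 / 2 : ℝ) ^ n}
  have hAc : ∀ n, IsClosed (A n) := fun n =>
    isClosed_le ((Metric.continuous_infDist_pt C).comp
      ((continuous_finsetSum _ fun i _ => hYc i).sub continuous_const)) continuous_const
  have hanti : Antitone A := by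
    refine antitone_nat_of_succ_le fun n ω hω => ?_
    change Metric.infDist _ C ≤ _ at hω ⊢
    have h1 := Metric.infDist_le_infDist_add_dist (s := C)
      (x := ∑ i ∈ Finset.range n, Y i ω - z) (y := ∑ i ∈ Finset.range (n + 1), Y i ω - z)
    have h2 : dist (∑ i ∈ Finset.range n, Y i ω - z) (∑ i ∈ Finset.range (n + 1), Y i ω - z) =
        ‖Y n ω‖ := by
      rw [dist_comm, dist_eq_norm, Finset.sum_range_succ]
      congr 1
      abel
    rw [pow_succ] at hω
    linarith [hYn n ω]
  have hInter : S ⁻¹' {y | y - z ∈ C} = ⋂ n, A n := by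
    ext ω
    have hlim : Tendsto (fun n => ∑ i ∈ Finset.range n, Y i ω - z) atTop (𝓝 (S ω - z)) :=
      (hsum ω).hasSum.tendsto_sum_nat.sub_const z
    have hlim' := ((Metric.continuous_infDist_pt C).tendsto _).comp hlim
    rw [mem_iInter]
    change S ω - z ∈ C ↔ _
    constructor
    · intro h n
      have h0 : Metric.infDist (S ω - z) C = 0 := Metric.infDist_zero_of_mem h
      have h1 := Metric.infDist_le_infDist_add_dist (s := C)
        (x := ∑ i ∈ Finset.range n, Y i ω - z) (y := S ω - z)
      have h2 : dist (∑ i ∈ Finset.range n, Y i ω - z) (S ω - z) ≤ 2 * (1 / 2 : ℝ) ^ n := by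
        rw [dist_sub_right]
        have := dist_le_of_le_geometric_of_tendsto (1 / 2 : ℝ) 1 (by norm_num)
          (f := fun n => ∑ i ∈ Finset.range n, Y i ω) (fun k => by
            rw [dist_comm, dist_eq_norm, Finset.sum_range_succ, add_sub_cancel_left, one_mul]
            exact hYn k ω) (hsum ω).hasSum.tendsto_sum_nat n
        refine this.trans (le_of_eq ?_)
        ring
      change Metric.infDist _ C ≤ _
      linarith
    · intro h
      rw [hC.mem_iff_infDist_zero hCne]
      have hzero : Tendsto (fun n : ℕ => 2 * (1 / 2 : ℝ) ^ n) atTop (𝓝 0) := by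
        simpa using (tendsto_pow_atTop_nhds_zero_of_lt_one (r := (1 / 2 : ℝ)) (by norm_num)
          (by norm_num)).const_mul 2
      exact le_antisymm (le_of_tendsto_of_tendsto' hlim' hzero h) Metric.infDist_nonneg
  rw [hInter]
  refine infinitePi_eq_zero_of_sections ν A (fun n => (hAc n).measurableSet) hanti ?_ ?_
  · intro n ω b h
    change Metric.infDist _ C ≤ _ at h ⊢
    have hsame : ∑ i ∈ Finset.range n, Y i (Function.update ω n b) =
        ∑ i ∈ Finset.range n, Y i ω :=
      Finset.sum_congr rfl fun i hi => by simp [Y, (Finset.mem_range.1 hi).ne]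
    rwa [hsame] at h
  · filter_upwards [eventually_ge_atTop ⌈‖z‖⌉₊] with n hn ω
    have hz : ‖z‖ ≤ n := (Nat.le_ceil _).trans (by exact_mod_cast hn)
    rw [← hInter]
    let W : X := S (Function.update ω n ⟨0, by simp⟩)
    have hW : ‖W‖ ≤ 2 :=
      tsum_of_norm_bounded hasSum_geometric_two (hYn · _)
    have hdec : ∀ b, S (Function.update ω n b) = ((1 / 2 : ℝ) ^ n) • (b : X) + W := by
      intro b
      have h1 : HasSum (fun i => (if i = n then ((1 / 2 : ℝ) ^ n) • (b : X) else 0) +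
          Y i (Function.update ω n ⟨0, by simp⟩)) (((1 / 2 : ℝ) ^ n) • (b : X) + W) :=
        (hasSum_ite_eq n _).add (hsum _).hasSum
      rw [← h1.tsum_eq]
      refine tsum_congr fun i => ?_
      by_cases h : i = n
      · subst h; simp [Y]
      · simp [Y, h]
    refine le_trans (measure_mono fun b hb => ?_) (hν n (z - W) ?_)
    · change S (Function.update ω n b) - z ∈ C at hb
      change _ ∈ C
      rw [hdec] at hb
      convert hb using 1
      abel
    · linarith [norm_sub_le z W]

/-- in a separable reflexive Banach space (reflexivity expressed by the
surjectivity of the canonical embedding into the double dual), every Haar positive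
closed convex set has nonempty interior. -/
theorem statement15 {X : Type*} [NormedAddCommGroup X] [NormedSpace ℝ X] [CompleteSpace X]
    [TopologicalSpace.SeparableSpace X] [MeasurableSpace X] [BorelSpace X]
    (hrefl : Function.Surjective (NormedSpace.inclusionInDoubleDual ℝ X))
    (C : Set X) (hC : IsClosed C) (hconv : Convex ℝ C) (hpos : ¬ HaarNull C) :
    (interior C).Nonempty := by
  classical
  rcases C.eq_empty_or_nonempty with rfl | hCne
  · exact absurd ⟨Measure.dirac 0, inferInstance, by simp⟩ hpos
  by_contra hint
  have hweights : ∀ n : ℕ, ∃ F : Finset X, (∀ f ∈ F, ‖f‖ ≤ (1 / 2 : ℝ) ^ n) ∧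
      ∃ p : F → ℝ, (∀ f, 0 ≤ p f) ∧ ∑ f, p f = 1 ∧
        ∀ z : X, ‖z‖ ≤ n + 2 →
          ∑ f, p f * indicator {f : F | (f : X) - z ∈ C} 1 f ≤ 3 / 4 := by
    intro n
    by_contra! hcon
    refine hint (interior_nonempty_of_finite_translates hrefl hC hconv (R := n + 2)
      (c := (1 / 2 : ℝ) ^ n) (by positivity) fun F hF => ?_)
    by_contra H
    obtain ⟨p, hp0, hp1, hp⟩ := exists_weights_of_no_translate hconv (by positivity) F hF H
    obtain ⟨z, hz, hlt⟩ := hcon F hF p hp0 hp1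
    exact absurd (hp z hz) hlt.not_ge
  choose F hF p hp0 hp1 hp using hweights
  let β : ∀ n, F n → Metric.closedBall (0 : X) 1 := fun n f =>
    ⟨((2 : ℝ) ^ n) • (f : X), by
      rw [mem_closedBall_zero_iff, norm_smul, Real.norm_of_nonneg (by positivity)]
      calc (2 : ℝ) ^ n * ‖(f : X)‖ ≤ 2 ^ n * (1 / 2) ^ n := by gcongr; exact hF n f f.2
        _ = 1 := by rw [← mul_pow]; norm_num⟩
  have hβ : ∀ n f, ((1 / 2 : ℝ) ^ n) • (β n f : X) = f := by
    intro n f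
    change ((1 / 2 : ℝ) ^ n) • ((2 : ℝ) ^ n) • (f : X) = f
    rw [smul_smul, ← mul_pow]
    norm_num
  let ν : ℕ → Measure (Metric.closedBall (0 : X) 1) := fun n =>
    ∑ f, ENNReal.ofReal (p n f) • Measure.dirac (β n f)
  have hνprob : ∀ n, IsProbabilityMeasure (ν n) := by
    refine fun n => ⟨?_⟩
    simp only [ν, Measure.coe_finsetSum, Finset.sum_apply, Measure.smul_apply, measure_univ,
      smul_eq_mul, mul_one]
    rw [← ENNReal.ofReal_sum_of_nonneg fun f _ => hp0 n f, hp1, ENNReal.ofReal_one]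
  refine hpos (haarNull_of_measures hC hCne ν fun n z hz => ?_)
  have hm : MeasurableSet {b : Metric.closedBall (0 : X) 1 |
      ((1 / 2 : ℝ) ^ n) • (b : X) - z ∈ C} :=
    (hC.preimage ((continuous_subtype_val.const_smul _).sub continuous_const)).measurableSet
  have h34 : (3 / 4 : ENNReal) = ENNReal.ofReal (3 / 4) := by
    rw [ENNReal.ofReal_div_of_pos (by norm_num)]
    simp
  simp only [ν, Measure.coe_finsetSum, Finset.sum_apply, Measure.smul_apply,
    Measure.dirac_apply' _ hm, smul_eq_mul]
  rw [h34]
  refine le_trans (le_of_eq ?_) (ENNReal.ofReal_le_ofReal (hp n z hz))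
  rw [ENNReal.ofReal_sum_of_nonneg fun f _ =>
    mul_nonneg (hp0 n f) (indicator_nonneg (by simp) f)]
  refine Finset.sum_congr rfl fun f _ => ?_
  by_cases h : (f : X) - z ∈ C <;> simp [-one_div, hβ, h]
end
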